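/- Let H be a finite non-abelian nilpotent group that is a Frobenius complement (i.e., H occurs as a Frobenius complement in some finite Frobenius group). Then H has perfect order classes if, and only if, H is isomorphic either to Q_8 × C_{3^k} or to Q_{16} × C_{5^k}, for some positive integer k, where Q_8 and Q_{16} are the generalised quaternion groups of orders 8 and 16 respectively. -/

import Mathlib

/-- The number of elements of order `n` in the group `G`. -/
noncomputable def orderCount (G : Type*) [Group G] (n : ℕ) : ℕ :=
  Nat.card {g : G // orderOf g = n}

/-- A group has *perfect order classes* if, for every positive integer `n`, the number of
elements of order `n` is either zero or a divisor of the order of the group. -/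
def PerfectOrderClasses (G : Type*) [Group G] : Prop :=
  ∀ n : ℕ, 0 < n → orderCount G n = 0 ∨ orderCount G n ∣ Nat.card G

/-- `G` is a Frobenius group with Frobenius kernel `K` and Frobenius complement `H`:
`K` is a nontrivial proper normal subgroup, `H` a subgroup with `K ⊓ H = ⊥` and `KH = G`,
and the conjugation action of `H` on `K` is fixed-point-free. -/
def IsFrobeniusWith {G : Type*} [Group G] (K H : Subgroup G) : Prop :=
  K ≠ ⊥ ∧ K ≠ ⊤ ∧ K.Normal ∧ K ⊓ H = ⊥ ∧
    (∀ g : G, ∃ k ∈ K, ∃ h ∈ H, g = k * h) ∧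
    ∀ h ∈ H, h ≠ 1 → ∀ k ∈ K, k ≠ 1 → h * k * h⁻¹ ≠ k


open Finset in
/-- Two commuting additive endomorphisms `X`, `Y` with `X ^ p = Y ^ p = 1` such that every `X * Y ^ i` and every
`Y ^ k` with `0 < k < p` is fixed-point-free can only live on a group killed by `p`. -/
theorem nsmul_eq_zero_of_fixedPointFree {V : Type*} [AddCommGroup V] {p : ℕ}
    {X Y : AddMonoid.End V} (hXY : Commute X Y) (hX : X ^ p = 1) (hY : Y ^ p = 1)
    (hfX : ∀ i < p, ∀ v, (X * Y ^ i) v = v → v = 0)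
    (hfY : ∀ k < p, k ≠ 0 → ∀ v, (Y ^ k) v = v → v = 0) (v : V) : p • v = 0 := by
  have key : ∀ g : AddMonoid.End V, g ^ p = 1 → (∀ v, g v = v → v = 0) →
      ∑ k ∈ range p, g ^ k = 0 := by
    intro g hg hf
    ext w
    apply hf
    have h := mul_geom_sum g p
    rw [hg, sub_self, sub_mul, one_mul, sub_eq_zero] at h
    exact DFunLike.congr_fun h w
  have h1 : ∀ i ∈ range p, ∑ k ∈ range p, (X * Y ^ i) ^ k = 0 := fun i hi => by
    refine key _ ?_ (hfX i (mem_range.mp hi))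
    rw [(hXY.pow_right i).mul_pow, hX, one_mul, ← pow_mul, mul_comm, pow_mul, hY, one_pow]
  have h2 : ∀ k ∈ range p, ∑ i ∈ range p, (X * Y ^ i) ^ k =
      if k = 0 then (p : AddMonoid.End V) else 0 := fun k hk => by
    split_ifs with hk0
    · simp [hk0]
    · have : ∀ i ∈ range p, (X * Y ^ i) ^ k = X ^ k * (Y ^ k) ^ i := fun i _ => by
        rw [(hXY.pow_right i).mul_pow, ← pow_mul, ← pow_mul, mul_comm i k]
      rw [sum_congr rfl this, ← mul_sum, key (Y ^ k) _ (hfY k (mem_range.mp hk) hk0), mul_zero]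
      rw [← pow_mul, mul_comm, pow_mul, hY, one_pow]
  rcases Nat.eq_zero_or_pos p with rfl | hp
  · simp
  have h3 := (sum_eq_zero h1).symm.trans (sum_comm.trans (sum_congr rfl h2))
  rw [sum_ite_eq' , if_pos (mem_range.mpr hp)] at h3
  have := DFunLike.congr_fun h3 v
  simpa using this.symm

/-- The group `A` acts fixed-point-freely by automorphisms on some nontrivial finite group. -/
def HasFixedPointFreeAction (A : Type*) [Group A] : Prop :=
  ∃ (K : Type) (_ : Group K) (_ : Finite K) (_ : Nontrivial K) (φ : A →* MulAut K),
    ∀ a ≠ 1, ∀ k, φ a k = k → k = 1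

theorem HasFixedPointFreeAction.of_injective {A B : Type*} [Group A] [Group B]
    (hA : HasFixedPointFreeAction A) (f : B →* A) (hf : Function.Injective f) :
    HasFixedPointFreeAction B := by
  obtain ⟨K, i1, i2, i3, φ, h⟩ := hA
  exact ⟨K, i1, i2, i3, φ.comp f, fun b hb => h (f b) fun hfb => hb (hf (hfb.trans f.map_one.symm))⟩

theorem IsFrobeniusWith.hasFixedPointFreeAction {G : Type} [Group G] [Finite G]
    {K H : Subgroup G} (h : IsFrobeniusWith K H) : HasFixedPointFreeAction H := by
  obtain ⟨hK, -, hn, -, -, hf⟩ := h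
  refine ⟨K, inferInstance, inferInstance, (Subgroup.nontrivial_iff_ne_bot K).mpr hK,
    (MulAut.conjNormal (H := K)).comp H.subtype, fun a ha k hk => ?_⟩
  by_contra hk1
  refine hf a a.2 (by simpa using ha) k k.2 (by simpa using hk1) ?_
  simpa using congrArg Subtype.val hk

open scoped IsMulCommutative in
/-- A `p`-group acting fixed-point-freely on a nontrivial finite group does so on a nontrivial
finite abelian group without elements of order `p`. -/
theorem exists_fixedPointFree_end {p : ℕ} [Fact p.Prime] {P : Type*} [Group P]
    (hP : IsPGroup p P) [Finite P] [Nontrivial P] (h : HasFixedPointFreeAction P) :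
    ∃ (V : Type) (_ : AddCommGroup V) (_ : Nontrivial V) (φ : P →* AddMonoid.End V),
      (∀ v : V, p • v = 0 → v = 0) ∧ ∀ a ≠ 1, ∀ v, φ a v = v → v = 0 := by
  obtain ⟨K, _, _, _, φ, hφ⟩ := h
  let : MulDistribMulAction P K := MulDistribMulAction.compHom K φ
  have hpK : ¬ p ∣ Nat.card K := by
    intro hd
    obtain ⟨b, hb, hb1⟩ := hP.exists_fixed_point_of_prime_dvd_card_of_fixed_point K hd
      (a := 1) (fun a => smul_one a)
    obtain ⟨a, ha⟩ := exists_ne (1 : P)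
    exact hb1 (hφ a ha b (hb a)).symm
  obtain ⟨q, hq, hqd⟩ := Nat.exists_prime_and_dvd (Finite.one_lt_card (α := K)).ne'
  have : Fact q.Prime := ⟨hq⟩
  obtain ⟨Q, hQ⟩ := hP.nonempty_fixed_point_of_prime_not_dvd_card (Sylow q K) (fun hd => by
    have Q : Sylow q K := default
    exact hpK (hd.trans (Q.card_dvd_index.trans (Q.1.index_dvd_card))))
  have hQmem : ∀ (a : P) (k : K), k ∈ Q → φ a k ∈ Q := fun a k hk => by
    have := hQ a
    rw [← this]
    exact Subgroup.smul_mem_pointwise_smul k a Q.1 hk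
  have hRn : Nontrivial Q.toSubgroup := by
    rw [← Finite.one_lt_card_iff_nontrivial]
    exact hq.one_lt.trans_le (Nat.le_of_dvd Nat.card_pos (Q.dvd_card_of_dvd_card hqd))
  have hcn := Q.2.center_nontrivial
  change ∀ (a : P) (k : K), k ∈ Q.toSubgroup → φ a k ∈ Q.toSubgroup at hQmem
  generalize Q.toSubgroup = R at hQmem hcn
  have hmem : ∀ (a : P) (z : Subgroup.center R), φ a z.1 ∈ R := fun a z => hQmem a _ z.1.2
  have hcen : ∀ (a : P) (z : Subgroup.center R), (⟨φ a z.1, hmem a z⟩ : R) ∈ Subgroup.center R := by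
    intro a z
    rw [Subgroup.mem_center_iff]
    intro g
    have := Subgroup.mem_center_iff.mp z.2 ⟨φ a⁻¹ g, hQmem _ _ g.2⟩
    have := congrArg (φ a) (congrArg Subtype.val this)
    apply Subtype.ext
    simpa using this
  let ψ : P →* AddMonoid.End (Additive (Subgroup.center R)) :=
    { toFun := fun a => MonoidHom.toAdditive
        { toFun := fun z => ⟨⟨φ a z.1, hmem a z⟩, hcen a z⟩
          map_one' := by ext; simp
          map_mul' := fun x y => by ext; simp }
      map_one' := by
        refine AddMonoidHom.ext fun z => Additive.toMul.injective (Subtype.ext (Subtype.ext ?_))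
        change φ 1 _ = _
        simp
        rfl
      map_mul' := fun a b => by
        refine AddMonoidHom.ext fun z => Additive.toMul.injective (Subtype.ext (Subtype.ext ?_))
        change φ (a * b) _ = φ a (φ b _)
        simp }
  have hψ : ∀ a (v : Additive (Subgroup.center R)), ((ψ a v).toMul.1.1 : K) = φ a v.toMul.1.1 :=
    fun _ _ => rfl
  refine ⟨Additive (Subgroup.center R), inferInstance, inferInstance, ψ, fun v hv => ?_,
    fun a ha v hv => ?_⟩
  · have h1 : (v.toMul.1.1 : K) ^ p = 1 := by
      have := congrArg (fun w => (w.toMul.1.1 : K)) hv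
      simpa using this
    have h2 : orderOf (v.toMul.1.1 : K) = 1 := by
      rcases (Nat.dvd_prime (Fact.out : p.Prime)).mp (orderOf_dvd_of_pow_eq_one h1) with h | h
      · exact h
      · exact absurd (h ▸ orderOf_dvd_natCard _) hpK
    rw [orderOf_eq_one_iff] at h2
    exact Additive.toMul.injective (Subtype.ext (Subtype.ext h2))
  · have := hφ a ha v.toMul.1.1 (by rw [← hψ, hv])
    exact Additive.toMul.injective (Subtype.ext (Subtype.ext this))

theorem HasFixedPointFreeAction.mem_zpowers_of_commute {p : ℕ} [hp : Fact p.Prime] {P : Type*} [Group P]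
    (hP : IsPGroup p P) [Finite P] (h : HasFixedPointFreeAction P) {x y : P}
    (hx : x ^ p = 1) (hy : y ^ p = 1) (hy1 : y ≠ 1) (hxy : Commute x y) :
    x ∈ Subgroup.zpowers y := by
  by_contra hxm
  have : Nontrivial P := ⟨y, 1, hy1⟩
  obtain ⟨V, _, _, φ, hV, hφ⟩ := exists_fixedPointFree_end hP h
  obtain ⟨v, hv⟩ := exists_ne (0 : V)
  refine hv (hV v (nsmul_eq_zero_of_fixedPointFree (hxy.map φ) (by rw [← map_pow, hx, map_one])
    (by rw [← map_pow, hy, map_one]) (fun i _ w hw => ?_) (fun k hk hk0 w hw => ?_) v))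
  · rw [← map_pow, ← map_mul] at hw
    refine hφ _ (fun h1 => hxm ?_) w hw
    rw [eq_inv_of_mul_eq_one_left h1]
    exact inv_mem (pow_mem (Subgroup.mem_zpowers y) i)
  · rw [← map_pow] at hw
    refine hφ _ (fun h1 => ?_) w hw
    have h2 := orderOf_eq_prime hy hy1
    have := Nat.le_of_dvd (Nat.pos_of_ne_zero hk0) (h2 ▸ orderOf_dvd_of_pow_eq_one h1)
    omega

/-- A finite `p`-group acting fixed-point-freely has a single subgroup of order `p`. -/
theorem HasFixedPointFreeAction.exists_unique_subgroup {p : ℕ} [hp : Fact p.Prime] {P : Type*} [Group P]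
    (hP : IsPGroup p P) [Finite P] [Nontrivial P] (h : HasFixedPointFreeAction P) :
    ∃ z : P, z ^ p = 1 ∧ z ≠ 1 ∧ ∀ x : P, x ^ p = 1 → x ∈ Subgroup.zpowers z := by
  have := hP.center_nontrivial
  obtain ⟨n, hn0, hn⟩ := (hP.to_subgroup (Subgroup.center P)).nontrivial_iff_card.mp inferInstance
  obtain ⟨z, hz⟩ := exists_prime_orderOf_dvd_card' (G := Subgroup.center P) p
    (hn ▸ dvd_pow_self p hn0.ne')
  have hz1 : (z : P) ≠ 1 := fun h1 => by
    have : z = 1 := Subtype.ext h1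
    rw [this, orderOf_one] at hz
    exact hp.out.one_lt.ne hz
  have hzp : (z : P) ^ p = 1 := by
    rw [← hz]; exact_mod_cast congrArg Subtype.val (pow_orderOf_eq_one z)
  exact ⟨z, hzp, hz1, fun x hx => h.mem_zpowers_of_commute hP hx hzp hz1
    (Subgroup.mem_center_iff.mp z.2 x)⟩

open Subgroup

/-- In a `p`-group with a single subgroup of order `p`, elements of order `p` are powers of any
nontrivial element. -/
theorem mem_zpowers_of_pow_prime_eq_one {p : ℕ} [hp : Fact p.Prime] {P : Type*} [Group P]
    (hP : IsPGroup p P)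
    (hU : ∀ x w : P, x ^ p = 1 → w ^ p = 1 → w ≠ 1 → x ∈ zpowers w) {x a : P} (hx : x ^ p = 1)
    (ha : a ≠ 1) : x ∈ zpowers a := by
  obtain ⟨n, hn⟩ := IsPGroup.iff_orderOf.mp hP a
  have hn0 : n ≠ 0 := by
    rintro rfl
    exact ha (orderOf_eq_one_iff.mp (by simpa using hn))
  obtain ⟨m, rfl⟩ := Nat.exists_eq_succ_of_ne_zero hn0
  have h1 : (a ^ p ^ m) ^ p = 1 := by rw [← pow_mul, ← pow_succ, ← hn, pow_orderOf_eq_one]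
  have h2 : a ^ p ^ m ≠ 1 := fun h => by
    have := (Nat.pow_dvd_pow_iff_le_right hp.out.one_lt).mp (hn ▸ orderOf_dvd_of_pow_eq_one h)
    omega
  exact (zpowers_le.mpr (pow_mem (mem_zpowers a) _)) (hU x _ hx h1 h2)

theorem zpow_mul_pow_of_conj_eq_zpow {P : Type*} [Group P] {a x : P} {r : ℤ}
    (h : x * a * x⁻¹ = a ^ r) (i : ℤ) (k : ℕ) :
    (a ^ i * x) ^ k = a ^ (i * ∑ j ∈ Finset.range k, r ^ j) * x ^ k := by
  have hc : ∀ i : ℤ, x * a ^ i = a ^ (r * i) * x := fun i => by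
    rw [zpow_mul, ← h, conj_zpow]; group
  induction k with
  | zero => simp
  | succ k ih =>
    have h2 : x ^ k * a ^ i = a ^ (r ^ k * i) * x ^ k := by
      clear ih
      induction k with
      | zero => simp
      | succ k ih => rw [pow_succ', mul_assoc, ih, ← mul_assoc, hc, mul_assoc]; congr 2; ring
    rw [pow_succ, ih, mul_assoc, ← mul_assoc (x ^ k), h2, Finset.sum_range_succ, pow_succ x,
      mul_add, zpow_add, mul_comm i (r ^ k)]
    simp only [mul_assoc]

/-- A noncyclic extension of a cyclic group `⟨a⟩` by an element `x` with `x ^ p ∈ ⟨a⟩`, inside a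
`p`-group with a single subgroup of order `p`, is only possible if `p = 2` and `x` inverts `a`. -/
theorem mem_zpowers_or_inverts {p : ℕ} [hp : Fact p.Prime] {P : Type*} [Group P]
    (hP : IsPGroup p P)
    (hU : ∀ x w : P, x ^ p = 1 → w ^ p = 1 → w ≠ 1 → x ∈ zpowers w) {x a : P}
    (hxa : x * a * x⁻¹ ∈ zpowers a) (hxp : x ^ p ∈ zpowers a) (hx : x ∉ zpowers a) :
    a ∈ zpowers x ∨ (p = 2 ∧ x * a * x⁻¹ = a⁻¹ ∧ ¬ Commute x a) := by
  rcases eq_or_ne a 1 with rfl | ha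
  · exact Or.inl (one_mem _)
  obtain ⟨n, hn⟩ := IsPGroup.iff_orderOf.mp hP a
  have hn0 : n ≠ 0 := by
    rintro rfl
    exact ha (orderOf_eq_one_iff.mp (by simpa using hn))
  have hord : ∀ k : ℤ, a ^ k = 1 ↔ (p : ℤ) ^ n ∣ k := fun k => by
    rw [← orderOf_dvd_iff_zpow_eq_one, hn]; push_cast; rfl
  have hpZ : Prime (p : ℤ) := Nat.prime_iff_prime_int.mp hp.out
  have hcop : ∀ t : ℤ, ¬ (p : ℤ) ∣ t → IsCoprime t ((p : ℤ) ^ n) := fun t ht =>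
    ((Prime.coprime_iff_not_dvd hpZ).mpr ht).symm.pow_right
  obtain ⟨r, hr, hrc⟩ : ∃ r : ℤ, x * a * x⁻¹ = a ^ r ∧ (Commute x a → r = 1) := by
    by_cases hc : Commute x a
    · exact ⟨1, by rw [hc.eq]; group, fun _ => rfl⟩
    · obtain ⟨r, hr⟩ := mem_zpowers_iff.mp hxa
      exact ⟨r, hr.symm, fun h => absurd h hc⟩
  obtain ⟨s, hs⟩ := mem_zpowers_iff.mp hxp
  by_cases hps : (p : ℤ) ∣ s
  swap
  · left
    obtain ⟨u, v, huv⟩ := hcop s hps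
    have : a = (x ^ p) ^ u := by
      rw [← hs, ← zpow_mul, ← mul_inv_eq_one, ← zpow_neg, ← zpow_one_add, hord]
      exact ⟨v, by linear_combination -huv⟩
    rw [this]
    exact zpow_mem (pow_mem (mem_zpowers x) _) _
  right
  obtain ⟨s', rfl⟩ := hps
  have hno : ∀ i : ℤ, ¬ (p : ℤ) ^ n ∣ i * (∑ j ∈ Finset.range p, r ^ j) + p * s' := by
    intro i hi
    have h1 : (a ^ i * x) ^ p = 1 := by
      rw [zpow_mul_pow_of_conj_eq_zpow hr, ← hs, ← zpow_add, hord]; exact hi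
    have h2 := mem_zpowers_of_pow_prime_eq_one hP hU h1 ha
    exact hx ((mul_mem_cancel_left (zpow_mem (mem_zpowers a) i)).mp h2)
  have hnt : ∀ t : ℤ, ∑ j ∈ Finset.range p, r ^ j = p * t → (p : ℤ) ∣ t := by
    intro t ht
    by_contra hpt
    obtain ⟨u, v, huv⟩ := hcop t hpt
    refine hno (-s' * u) ⟨p * s' * v, ?_⟩
    rw [ht]
    linear_combination (-p * s') * huv
  have hrp : (p : ℤ) ^ n ∣ r ^ p - 1 := by
    have h1 : ∀ k : ℕ, x ^ k * a * (x ^ k)⁻¹ = a ^ (r ^ k) := fun k => by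
      induction k with
      | zero => simp
      | succ k ih =>
        have : x ^ (k + 1) * a * (x ^ (k + 1))⁻¹ = x * (x ^ k * a * (x ^ k)⁻¹) * x⁻¹ := by
          rw [pow_succ']; group
        rw [this, ih, ← conj_zpow, hr, ← zpow_mul, pow_succ']
    rw [← hord, zpow_sub_one, ← h1, ← hs]
    group
  have hr1 : (p : ℤ) ∣ r - 1 := by
    have h1 : (p : ℤ) ∣ r ^ p - 1 := (dvd_pow_self _ hn0).trans hrp
    rw [← ZMod.intCast_zmod_eq_zero_iff_dvd] at h1 ⊢
    push_cast at h1 ⊢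
    rwa [ZMod.pow_card] at h1
  obtain ⟨w, hw⟩ := hr1
  rcases hp.out.eq_two_or_odd' with rfl | hodd
  · refine ⟨rfl, ?_⟩
    have hT : ∑ j ∈ Finset.range 2, r ^ j = 1 + r := by simp [Finset.sum_range_succ]
    rw [hT] at hno hnt
    push_cast at *
    have hw2 : ¬ (2 : ℤ) ∣ w := fun h => by
      have := hnt (1 + w) (by linear_combination hw)
      omega
    have hcw := (hcop w hw2).symm
    have h2s : (2 : ℤ) ^ n ∣ 2 * (2 * s') := by
      refine hcw.dvd_of_dvd_mul_left ?_
      have : a ^ (r * (2 * s')) = a ^ (2 * s') := by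
        rw [zpow_mul, ← hr, conj_zpow, hs]; group
      rw [← mul_inv_eq_one, ← zpow_neg, ← zpow_add, hord] at this
      obtain ⟨c, hc⟩ := this
      exact ⟨c, by linear_combination hc - 2 * s' * hw⟩
    have h2r : (2 : ℤ) ^ n ∣ 2 * (1 + r) := by
      refine hcw.dvd_of_dvd_mul_left ?_
      obtain ⟨c, hc⟩ := hrp
      exact ⟨c, by linear_combination hc - (1 + r) * hw⟩
    have hnr : (2 : ℤ) ^ n ∣ 1 + r := by
      by_contra hnr
      obtain ⟨α, hα⟩ := h2s
      obtain ⟨β, hβ⟩ := h2r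
      have hα2 : ¬ (2 : ℤ) ∣ α := by
        rintro ⟨γ, rfl⟩
        exact hno 0 ⟨γ, by linarith⟩
      have hβ2 : ¬ (2 : ℤ) ∣ β := by
        rintro ⟨γ, rfl⟩
        exact hnr ⟨γ, by linarith⟩
      obtain ⟨γ, hγ⟩ : (2 : ℤ) ∣ α + β := by omega
      refine hno 1 ⟨γ, ?_⟩
      have : (2 : ℤ) ^ n * (α + β) = 2 ^ n * (2 * γ) := by rw [hγ]
      linarith
    constructor
    · rw [hr, ← mul_eq_one_iff_eq_inv, ← zpow_add_one, hord, add_comm]; exact hnr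
    · intro hc
      apply hw2
      have := hrc hc
      omega
  · exfalso
    have h1 := odd_sq_dvd_geom_sum₂_sub (a := (1 : ℤ)) (b := w) hodd
    have h2 : 1 + (p : ℤ) * w = r := by linarith
    rw [h2] at h1
    simp only [one_pow, mul_one] at h1
    obtain ⟨c, hc⟩ := h1
    have h3 := hnt (1 + p * c) (by linear_combination hc)
    have h4 : (p : ℤ) ∣ 1 := by
      have := dvd_sub h3 (dvd_mul_right (p : ℤ) c)
      simpa using this
    exact hpZ.not_isUnit (isUnit_of_dvd_one h4)

theorem IsPGroup.exists_mem_center_of_normal {p : ℕ} [hp : Fact p.Prime] {P : Type*} [Group P]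
    [Finite P] (hP : IsPGroup p P) (N : Subgroup P) [N.Normal] (hN : N ≠ ⊥) :
    ∃ g ∈ N, g ∈ center P ∧ orderOf g = p := by
  have hN' : Nontrivial N := (nontrivial_iff_ne_bot N).mpr hN
  have hQ : N ⊓ center P ≠ ⊥ := by
    obtain ⟨n, hn0, hn⟩ := (hP.to_subgroup N).nontrivial_iff_card.mp inferInstance
    obtain ⟨b, hb, hb1⟩ :=
      (hP.of_equiv ConjAct.toConjAct).exists_fixed_point_of_prime_dvd_card_of_fixed_point N
        (hn ▸ dvd_pow_self p hn0.ne') (a := 1) (fun a => smul_one a)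
    intro hbot
    refine hb1 (Subtype.ext ?_).symm
    have : (b : P) ∈ N ⊓ center P := by
      refine ⟨b.2, mem_center_iff.mpr fun g => ?_⟩
      have := congrArg Subtype.val (hb (ConjAct.toConjAct g))
      rw [ConjAct.Subgroup.val_conj_smul, ConjAct.smul_def, ConjAct.ofConjAct_toConjAct] at this
      exact mul_inv_eq_iff_eq_mul.mp this
    rwa [hbot, mem_bot] at this
  have : Nontrivial (N ⊓ center P : Subgroup P) := (nontrivial_iff_ne_bot _).mpr hQ
  obtain ⟨n, hn0, hn⟩ := (hP.to_subgroup (N ⊓ center P)).nontrivial_iff_card.mp inferInstance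
  obtain ⟨g, hg⟩ := exists_prime_orderOf_dvd_card' (G := (N ⊓ center P : Subgroup P)) p
    (hn ▸ dvd_pow_self p hn0.ne')
  exact ⟨g, g.2.1, g.2.2, by rwa [orderOf_coe]⟩

/-- A chief step: between normal subgroups `A < C` of a `p`-group there is an element of `C` that is
central of order `p` modulo `A`. -/
theorem IsPGroup.exists_central_mod {p : ℕ} [hp : Fact p.Prime] {P : Type*} [Group P]
    [Finite P] (hP : IsPGroup p P) (A C : Subgroup P) [A.Normal] [C.Normal] (hAC : A < C) :
    ∃ x ∈ C, x ∉ A ∧ x ^ p ∈ A ∧ ∀ g, x⁻¹ * (g * x * g⁻¹) ∈ A := by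
  have hn : (C.map (QuotientGroup.mk' A)).Normal :=
    Normal.map inferInstance _ (QuotientGroup.mk'_surjective A)
  obtain ⟨y, hyC, hyZ, hyp⟩ := (hP.to_quotient A).exists_mem_center_of_normal
    (C.map (QuotientGroup.mk' A)) (fun h => hAC.not_ge (by
      rwa [Subgroup.map_eq_bot_iff, QuotientGroup.ker_mk'] at h))
  obtain ⟨x, hxC, rfl⟩ := hyC
  refine ⟨x, hxC, fun hxA => ?_, ?_, fun g => ?_⟩
  · rw [show QuotientGroup.mk' A x = 1 from (QuotientGroup.eq_one_iff x).mpr hxA,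
      orderOf_one] at hyp
    exact hp.out.one_lt.ne hyp
  · rw [← QuotientGroup.eq_one_iff]
    exact hyp ▸ pow_orderOf_eq_one (QuotientGroup.mk' A x)
  · rw [← QuotientGroup.eq_one_iff]
    have := mem_center_iff.mp hyZ (QuotientGroup.mk' A g)
    change ((x : P ⧸ A)⁻¹ * ((g : P ⧸ A) * x * (g : P ⧸ A)⁻¹)) = 1
    rw [show (g : P ⧸ A) * x = x * g from this]
    group

/-- A finite group has a normal cyclic subgroup `⟨a⟩` that is not properly contained in any `⟨x⟩`
with `x` central modulo `⟨a⟩`. -/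
theorem exists_maximal_normal_zpowers {P : Type*} [Group P] [Finite P] :
    ∃ a : P, (zpowers a).Normal ∧ ∀ x : P, x ∉ zpowers a →
      (∀ g, x⁻¹ * (g * x * g⁻¹) ∈ zpowers a) → a ∉ zpowers x := by
  obtain ⟨a, ha, hmax⟩ := Set.exists_max_image {a : P | (zpowers a).Normal} orderOf
    (Set.toFinite _) ⟨1, by simp only [Set.mem_ofPred_eq, zpowers_one_eq_bot]; infer_instance⟩
  refine ⟨a, ha, fun x hx hxg hax => ?_⟩
  have hle : zpowers a ≤ zpowers x := zpowers_le.mpr hax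
  have hxn : (zpowers x).Normal := by
    refine ⟨fun y hy g => ?_⟩
    obtain ⟨i, rfl⟩ := mem_zpowers_iff.mp hy
    rw [← conj_zpow]
    exact zpow_mem ((mul_mem_cancel_left (inv_mem (mem_zpowers x))).mp (hle (hxg g))) i
  have hle' := hmax x hxn
  rw [← Nat.card_zpowers, ← Nat.card_zpowers] at hle'
  exact hx ((eq_of_le_of_card_ge hle hle') ▸ mem_zpowers x)

theorem isCyclic_of_unique_subgroup_of_odd {p : ℕ} [hp : Fact p.Prime] (hp2 : p ≠ 2) {P : Type*}
    [Group P] [Finite P] (hP : IsPGroup p P)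
    (hU : ∀ x w : P, x ^ p = 1 → w ^ p = 1 → w ≠ 1 → x ∈ zpowers w) : IsCyclic P := by
  obtain ⟨a, ha, hmax⟩ := exists_maximal_normal_zpowers (P := P)
  refine isCyclic_iff_exists_zpowers_eq_top.mpr ⟨a, ?_⟩
  by_contra htop
  obtain ⟨x, -, hx, hxp, hxg⟩ := hP.exists_central_mod (zpowers a) ⊤ (lt_top_iff_ne_top.mpr htop)
  rcases mem_zpowers_or_inverts hP hU (ha.conj_mem a (mem_zpowers a) x) hxp hx with h | h
  · exact hmax x hx hxg h
  · exact hp2 h.1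

theorem exists_quaternion_generators {P : Type*} [Group P] [Finite P] (hP : IsPGroup 2 P)
    (hU : ∀ x w : P, x ^ 2 = 1 → w ^ 2 = 1 → w ≠ 1 → x ∈ zpowers w) (hcyc : ¬ IsCyclic P) :
    ∃ (a x : P) (n : ℕ), orderOf a = 2 ^ (n + 2) ∧ x * a * x⁻¹ = a⁻¹ ∧ x ^ 2 = a ^ 2 ^ (n + 1) ∧
      x ∉ zpowers a ∧ ∀ g, g ∈ zpowers a ∨ x * g ∈ zpowers a := by
  obtain ⟨a, ha, hmax⟩ := exists_maximal_normal_zpowers (P := P)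
  have hcore : ∀ {x : P}, x ^ 2 ∈ zpowers a → x ∉ zpowers a →
      a ∈ zpowers x ∨ (x * a * x⁻¹ = a⁻¹ ∧ ¬ Commute x a) := fun {x} h1 h2 =>
    (mem_zpowers_or_inverts hP hU (ha.conj_mem a (mem_zpowers a) x) h1 h2).imp_right And.right
  have hcent : ∀ g, Commute g a → g ∈ zpowers a := by
    by_contra! hg
    obtain ⟨g, hga, hg⟩ := hg
    have hlt : zpowers a < centralizer (zpowers a : Set P) := by
      refine lt_of_le_of_ne (le_centralizer _) fun h => hg ?_
      rw [h, mem_centralizer_iff]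
      rintro _ ⟨i, rfl⟩
      exact (hga.zpow_right i).symm
    obtain ⟨x, hxC, hx, hxp, hxg⟩ := hP.exists_central_mod _ _ hlt
    rcases hcore hxp hx with h | h
    · exact hmax x hx hxg h
    · exact h.2 (mem_centralizer_iff.mp hxC a (mem_zpowers a)).symm
  have hinv : ∀ {x : P}, x ^ 2 ∈ zpowers a → x ∉ zpowers a →
      x * a * x⁻¹ = a⁻¹ ∧ ¬ Commute x a := fun {x} h1 h2 => by
    refine (hcore h1 h2).resolve_left fun h => h2 (hcent x ?_)
    obtain ⟨i, rfl⟩ := mem_zpowers_iff.mp h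
    exact Commute.self_zpow x i
  have hnontop : zpowers a ≠ ⊤ := fun h => hcyc (isCyclic_iff_exists_zpowers_eq_top.mpr ⟨a, h⟩)
  obtain ⟨x, -, hx, hxp, -⟩ := hP.exists_central_mod (zpowers a) ⊤ (lt_top_iff_ne_top.mpr hnontop)
  obtain ⟨hxa, hxc⟩ := hinv hxp hx
  have ha2 : a ^ 2 ≠ 1 := fun h => hxc (by
    have : a⁻¹ = a := inv_eq_of_mul_eq_one_left (by rw [← sq, h])
    rw [this] at hxa
    exact mul_inv_eq_iff_eq_mul.mp hxa)
  obtain ⟨m, hm⟩ := IsPGroup.iff_orderOf.mp hP a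
  obtain ⟨n, rfl⟩ : ∃ n, m = n + 2 := by
    refine ⟨m - 2, ?_⟩
    have : ¬ m ≤ 1 := fun h => ha2 (orderOf_dvd_iff_pow_eq_one.mp (by
      rw [hm]; exact (pow_dvd_pow 2 h)))
    omega
  have hsq : ∀ w : P, w ^ 2 * a * (w ^ 2)⁻¹ ≠ a⁻¹ := by
    intro w hw
    obtain ⟨r, hr⟩ := mem_zpowers_iff.mp (ha.conj_mem a (mem_zpowers a) w)
    have h1 : w ^ 2 * a * (w ^ 2)⁻¹ = a ^ (r * r) := by
      rw [zpow_mul, hr, conj_zpow, hr, sq]; group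
    rw [h1, ← mul_eq_one_iff_eq_inv, ← zpow_add_one, ← orderOf_dvd_iff_zpow_eq_one, hm] at hw
    have h4 : (4 : ℤ) ∣ r * r + 1 := by
      refine dvd_trans ?_ hw
      push_cast
      exact ⟨2 ^ n, by ring⟩
    have : r % 4 = 0 ∨ r % 4 = 1 ∨ r % 4 = 2 ∨ r % 4 = 3 := by omega
    rcases this with h | h | h | h <;> simp [Int.dvd_iff_emod_eq_zero, Int.add_emod, Int.mul_emod, h] at h4
  have hsqmem : ∀ g : P, g ^ 2 ∈ zpowers a := by
    intro g
    by_contra hg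
    have hex : ∃ k, g ^ 2 ^ k ∈ zpowers a := by
      obtain ⟨k, hk⟩ := hP g
      exact ⟨k, hk ▸ one_mem _⟩
    classical
    have hk := Nat.find_spec hex
    have hk' := fun j => Nat.find_min hex (m := j)
    obtain ⟨k, hkk⟩ : ∃ k, Nat.find hex = k + 2 := by
      refine ⟨Nat.find hex - 2, ?_⟩
      have h0 : Nat.find hex ≠ 0 := fun h => hg (by
        rw [h, pow_zero, pow_one] at hk; exact pow_mem hk 2)
      have h1 : Nat.find hex ≠ 1 := fun h => hg (by rwa [h, pow_one] at hk)
      omega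
    rw [hkk] at hk
    have h1 := hk' (k + 1) (by omega)
    have h2 : g ^ 2 ^ (k + 1) = (g ^ 2 ^ k) ^ 2 := by rw [← pow_mul, pow_succ]
    refine hsq (g ^ 2 ^ k) (h2 ▸ (hinv ?_ h1).1)
    rwa [← pow_mul, ← pow_succ]
  have hxx : x ^ 2 = a ^ 2 ^ (n + 1) := by
    have hx4 : (x ^ 2) ^ 2 = 1 := by
      obtain ⟨i, hi⟩ := mem_zpowers_iff.mp hxp
      have h1 : (a⁻¹) ^ i = a ^ i := by rw [← hxa, conj_zpow, hi]; group
      rw [inv_zpow, inv_eq_iff_mul_eq_one, hi, ← sq] at h1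
      exact h1
    have hb2 : (a ^ 2 ^ (n + 1)) ^ 2 = 1 := by
      rw [← pow_mul, ← pow_succ, ← hm, pow_orderOf_eq_one]
    have hb1 : a ^ 2 ^ (n + 1) ≠ 1 := fun h => by
      have := (Nat.pow_dvd_pow_iff_le_right (one_lt_two)).mp (hm ▸ orderOf_dvd_of_pow_eq_one h)
      omega
    have hx1 : x ^ 2 ≠ 1 := fun h => hx (mem_zpowers_of_pow_prime_eq_one hP hU h (fun h' => ha2 (by
      rw [h', one_pow])))
    obtain ⟨i, hi⟩ := mem_zpowers_iff.mp (hU _ _ hx4 hb2 hb1)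
    rcases Int.even_or_odd' i with ⟨j, rfl | rfl⟩
    · rw [zpow_mul, zpow_ofNat, hb2, one_zpow] at hi
      exact absurd hi.symm hx1
    · rw [zpow_add, zpow_mul, zpow_ofNat, hb2, one_zpow, one_mul, zpow_one] at hi
      exact hi.symm
  refine ⟨a, x, n, hm, hxa, hxx, hx, fun g => ?_⟩
  by_cases hg : g ∈ zpowers a
  · exact Or.inl hg
  · right
    apply hcent
    have h1 := (hinv (hsqmem g) hg).1
    have h2 : x * g * a * (x * g)⁻¹ = a := by
      have : x * g * a * (x * g)⁻¹ = x * (g * a * g⁻¹) * x⁻¹ := by group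
      rw [this, h1, ← conj_inv, hxa, inv_inv]
    exact mul_inv_eq_iff_eq_mul.mp h2

/-- A group generated by `a` and `x` subject to the relations of a generalised quaternion group, with
`a` of the right order, is a generalised quaternion group. -/
theorem nonempty_quaternionGroup_mulEquiv {P : Type*} [Group P] {m : ℕ} [NeZero m] {a x : P}
    (ha : orderOf a = 2 * m) (hxa : x * a * x⁻¹ = a⁻¹) (hx2 : x ^ 2 = a ^ m)
    (hx : x ∉ zpowers a) (hg : ∀ g, g ∈ zpowers a ∨ x * g ∈ zpowers a) :
    Nonempty (QuaternionGroup m ≃* P) := by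
  let f : ZMod (2 * m) →+ Additive P := ZMod.lift (2 * m)
    ⟨zmultiplesHom (Additive P) (Additive.ofMul a), by
      rw [zmultiplesHom_apply, natCast_zsmul, ← ofMul_pow, ← ha, pow_orderOf_eq_one, ofMul_one]⟩
  let e : ZMod (2 * m) → P := fun i => (f i).toMul
  have he : ∀ i : ℤ, e i = a ^ i := fun i => by
    change (f i).toMul = _
    simp only [f, ZMod.lift_coe, zmultiplesHom_apply, toMul_zsmul, toMul_ofMul]
  have headd : ∀ i j, e (i + j) = e i * e j := fun i j => by simp [e]
  have hem : e (m : ZMod (2 * m)) = x ^ 2 := by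
    have := he (m : ℤ)
    rw [Int.cast_natCast, zpow_natCast] at this
    rw [this, hx2]
  have hemem : ∀ i, e i ∈ zpowers a := fun i => by
    obtain ⟨k, rfl⟩ := ZMod.intCast_surjective i
    rw [he]; exact zpow_mem (mem_zpowers a) k
  have hconj : ∀ i, e i * x = x * (e i)⁻¹ := fun i => by
    obtain ⟨k, rfl⟩ := ZMod.intCast_surjective i
    have h : x * a ^ (-k) * x⁻¹ = a ^ k := by rw [← conj_zpow, hxa, inv_zpow', neg_neg]
    rw [he, ← zpow_neg]
    exact (mul_inv_eq_iff_eq_mul.mp h).symm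
  have hinj : Function.Injective e := by
    intro i j hij
    obtain ⟨k, rfl⟩ := ZMod.intCast_surjective i
    obtain ⟨l, rfl⟩ := ZMod.intCast_surjective j
    rw [he, he, zpow_eq_zpow_iff_modEq, ha] at hij
    exact (ZMod.intCast_eq_intCast_iff _ _ _).mpr hij
  let F : QuaternionGroup m →* P := MonoidHom.mk'
    (fun | .a i => e i | .xa i => x * e i) (by
      rintro (i | i) (j | j)
      · simp only [QuaternionGroup.a_mul_a, headd]
      · simp only [QuaternionGroup.a_mul_xa]
        rw [← mul_assoc, hconj, sub_eq_neg_add, headd, mul_assoc]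
        congr 2
        simp [e]
      · simp only [QuaternionGroup.xa_mul_a, headd, mul_assoc]
      · simp only [QuaternionGroup.xa_mul_xa]
        rw [add_sub_assoc, headd, hem, sub_eq_neg_add, headd, sq, mul_assoc x (e i),
          ← mul_assoc (e i), hconj]
        simp [e, mul_assoc])
  refine ⟨MulEquiv.ofBijective F ⟨?_, fun g => ?_⟩⟩
  · rintro (i | i) (j | j) hij
    · exact congrArg _ (hinj hij)
    · refine absurd ?_ hx
      exact (mul_mem_cancel_right (hemem j)).mp ((show e i = x * e j from hij) ▸ hemem i)
    · refine absurd ?_ hx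
      exact (mul_mem_cancel_right (hemem i)).mp ((show x * e i = e j from hij).symm ▸ hemem j)
    · exact congrArg _ (hinj (mul_left_cancel (show x * e i = x * e j from hij)))
  · rcases hg g with h | h
    · obtain ⟨i, rfl⟩ := mem_zpowers_iff.mp h
      exact ⟨.a i, he i⟩
    · obtain ⟨i, hi⟩ := mem_zpowers_iff.mp h
      refine ⟨.xa (i - m : ZMod (2 * m)), ?_⟩
      change x * e _ = g
      have h2 : e (m : ZMod (2 * m)) * e (i - m : ZMod (2 * m)) = x * g := by
        rw [← headd, ← hi, ← he]; congr 1; ring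
      rw [hem, sq, mul_assoc] at h2
      exact mul_left_cancel h2

theorem Group.IsNilpotent.commute_of_coprime_orderOf {G : Type*} [Group G] [Finite G]
    (hG : Group.IsNilpotent G) {x y : G} (h : (orderOf x).Coprime (orderOf y)) : Commute x y := by
  obtain ⟨e⟩ := (Group.isNilpotent_of_finite_tfae (G := G).out 0 4).mp hG
  suffices Commute (e.symm x) (e.symm y) by simpa using this.map e
  refine funext fun p => funext fun P => ?_
  have hp : Fact (p : ℕ).Prime := ⟨Nat.prime_of_mem_primeFactors p.2⟩
  let π : G →* P := (Pi.evalMonoidHom _ P).comp ((Pi.evalMonoidHom _ p).comp e.symm.toMonoidHom)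
  change π x * π y = π y * π x
  obtain ⟨i, hi⟩ := IsPGroup.iff_orderOf.mp P.2 (π x)
  obtain ⟨j, hj⟩ := IsPGroup.iff_orderOf.mp P.2 (π y)
  have hc : (orderOf (π x)).Coprime (orderOf (π y)) :=
    Nat.Coprime.of_dvd (orderOf_map_dvd π x) (orderOf_map_dvd π y) h
  rcases Nat.eq_zero_or_pos i with rfl | hi0
  · rw [orderOf_eq_one_iff.mp (hi.trans (pow_zero _)), one_mul, mul_one]
  rcases Nat.eq_zero_or_pos j with rfl | hj0
  · rw [orderOf_eq_one_iff.mp (hj.trans (pow_zero _)), one_mul, mul_one]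
  rw [hi, hj, Nat.coprime_pow_left_iff hi0, Nat.coprime_pow_right_iff hj0, Nat.coprime_self] at hc
  exact absurd hc hp.out.one_lt.ne'

theorem Group.IsNilpotent.exists_sylow_prod_mulEquiv {G : Type*} [Group G] [Finite G]
    (hG : Group.IsNilpotent G) (p : ℕ) [hp : Fact p.Prime] (S : Sylow p G) :
    ∃ N : Subgroup G, ¬ p ∣ Nat.card N ∧ Nonempty (S.toSubgroup × N ≃* G) := by
  obtain ⟨N, hN⟩ := exists_right_complement'_of_coprime (N := S.toSubgroup) S.card_coprime_index
  have hcard : Nat.card N = S.toSubgroup.index := hN.symm.index_eq_card.symm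
  have hcop : (Nat.card S.toSubgroup).Coprime (Nat.card N) := hcard ▸ S.card_coprime_index
  have hcomm : ∀ (s : S.toSubgroup) (n : N), Commute (s : G) (n : G) := fun s n => by
    refine hG.commute_of_coprime_orderOf (Nat.Coprime.of_dvd ?_ ?_ hcop)
    · rw [orderOf_coe]; exact orderOf_dvd_natCard s
    · rw [orderOf_coe]; exact orderOf_dvd_natCard n
  refine ⟨N, hcard ▸ S.not_dvd_index, ⟨MulEquiv.ofBijective
    (S.toSubgroup.subtype.noncommCoprod N.subtype hcomm) hN⟩⟩

theorem orderCount_congr {G G' : Type*} [Group G] [Group G'] (e : G ≃* G') (n : ℕ) :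
    orderCount G n = orderCount G' n :=
  Nat.card_congr (e.toEquiv.subtypeEquiv fun g => by
    rw [← MulEquiv.orderOf_eq e g]; rfl)

theorem PerfectOrderClasses.congr {G G' : Type*} [Group G] [Group G'] (e : G ≃* G')
    (h : PerfectOrderClasses G) : PerfectOrderClasses G' := fun n hn => by
  rw [← orderCount_congr e, ← Nat.card_congr e.toEquiv]
  exact h n hn

theorem orderCount_prod {A B : Type*} [Group A] [Group B]
    (hAB : (Nat.card A).Coprime (Nat.card B)) {a b : ℕ} (ha : a ∣ Nat.card A)
    (hb : b ∣ Nat.card B) : orderCount (A × B) (a * b) = orderCount A a * orderCount B b := by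
  unfold orderCount
  rw [← Nat.card_prod]
  refine Nat.card_congr ((Equiv.subtypeEquivRight fun g => ?_).trans
    (Equiv.subtypeProdEquivProd (p := fun x : A => orderOf x = a) (q := fun y : B => orderOf y = b)))
  have h1 := orderOf_dvd_natCard g.1
  have h2 := orderOf_dvd_natCard g.2
  rw [Prod.orderOf, (Nat.Coprime.of_dvd h1 h2 hAB).lcm_eq_mul]
  constructor
  · intro h
    constructor
    · refine Nat.dvd_antisymm ?_ ?_
      · exact (Nat.Coprime.of_dvd h1 hb hAB).dvd_of_dvd_mul_right (h ▸ dvd_mul_right _ _)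
      · exact (Nat.Coprime.of_dvd ha h2 hAB).dvd_of_dvd_mul_right (h ▸ dvd_mul_right _ _)
    · refine Nat.dvd_antisymm ?_ ?_
      · exact (Nat.Coprime.of_dvd ha h2 hAB).symm.dvd_of_dvd_mul_left (h ▸ dvd_mul_left _ _)
      · exact (Nat.Coprime.of_dvd h1 hb hAB).symm.dvd_of_dvd_mul_left (h ▸ dvd_mul_left _ _)
  · rintro ⟨h, h'⟩
    rw [h, h']

theorem orderCount_of_isCyclic {G : Type*} [Group G] [Finite G] [IsCyclic G] {d : ℕ}
    (hd : d ∣ Nat.card G) : orderCount G d = d.totient := by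
  classical
  have := Fintype.ofFinite G
  rw [Nat.card_eq_fintype_card] at hd
  rw [← IsCyclic.card_orderOf_eq_totient hd, orderCount, Nat.card_eq_fintype_card,
    Fintype.card_subtype]

/-- A product of groups of coprime orders has perfect order classes as soon as all products of
the numbers of elements of given orders divide the order of the product. -/
theorem perfectOrderClasses_prod_iff {A B : Type*} [Group A] [Group B] [Finite A] [Finite B]
    (hAB : (Nat.card A).Coprime (Nat.card B)) :
    PerfectOrderClasses (A × B) ↔ ∀ (x : A) (y : B),
      orderCount A (orderOf x) * orderCount B (orderOf y) ∣ Nat.card A * Nat.card B := by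
  have hmul : ∀ (x : A) (y : B), orderCount (A × B) (orderOf x * orderOf y) =
      orderCount A (orderOf x) * orderCount B (orderOf y) := fun x y =>
    orderCount_prod hAB (orderOf_dvd_natCard x) (orderOf_dvd_natCard y)
  have hlcm : ∀ (x : A) (y : B), orderOf (x, y) = orderOf x * orderOf y := fun x y => by
    rw [Prod.orderOf, (Nat.Coprime.of_dvd (orderOf_dvd_natCard x) (orderOf_dvd_natCard y)
      hAB).lcm_eq_mul]
  constructor
  · intro h x y
    rw [← hmul, ← Nat.card_prod]
    refine (h _ (Nat.mul_pos (orderOf_pos x) (orderOf_pos y))).resolve_left fun h0 => ?_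
    rw [orderCount, Finite.card_eq_zero_iff] at h0
    exact h0.false ⟨(x, y), hlcm x y⟩
  · intro h n _
    by_cases hn : ∃ g : A × B, orderOf g = n
    · obtain ⟨⟨x, y⟩, rfl⟩ := hn
      right
      rw [hlcm, hmul, Nat.card_prod]
      exact h x y
    · left
      rw [orderCount, Finite.card_eq_zero_iff]
      exact ⟨fun g => hn ⟨g.1, g.2⟩⟩

/-- The elements of a quaternion group, sorted into rotations and the others. -/
def quaternionGroupEquivSum (m : ℕ) : QuaternionGroup m ≃ ZMod (2 * m) ⊕ ZMod (2 * m) where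
  toFun | .a i => .inl i | .xa i => .inr i
  invFun | .inl i => .a i | .inr i => .xa i
  left_inv := by rintro (i | i) <;> rfl
  right_inv := by rintro (i | i) <;> rfl

theorem orderCount_quaternionGroup (m : ℕ) [NeZero m] {d : ℕ} (hd : d ∣ 2 * m) :
    orderCount (QuaternionGroup m) d = d.totient + if d = 4 then 2 * m else 0 := by
  have hrot : Nat.card {i : ZMod (2 * m) // orderOf (QuaternionGroup.a i) = d} = d.totient := by
    have hcard : Nat.card (Multiplicative (ZMod (2 * m))) = 2 * m := by
      rw [Nat.card_congr Multiplicative.toAdd, Nat.card_zmod]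
    rw [← orderCount_of_isCyclic (G := Multiplicative (ZMod (2 * m))) (hcard.symm ▸ hd)]
    refine Nat.card_congr (Multiplicative.ofAdd.subtypeEquiv fun i => ?_)
    rw [QuaternionGroup.orderOf_a, orderOf_ofAdd_eq_addOrderOf]
    have : i = ((i.val : ℕ) : ZMod (2 * m)) := (ZMod.natCast_zmod_val i).symm
    conv_rhs => rw [this, ZMod.addOrderOf_coe _ (NeZero.ne _)]
  have hflip : Nat.card {i : ZMod (2 * m) // orderOf (QuaternionGroup.xa i) = d} =
      if d = 4 then 2 * m else 0 := by
    simp only [QuaternionGroup.orderOf_xa]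
    split_ifs with h
    · subst h
      simp
    · have : IsEmpty {i : ZMod (2 * m) // 4 = d} := ⟨fun i => h i.2.symm⟩
      simp
  rw [← hrot, ← hflip, ← Nat.card_sum, orderCount]
  refine Nat.card_congr (((quaternionGroupEquivSum m).subtypeEquiv (q := Sum.elim
    (fun i => orderOf (QuaternionGroup.a i) = d) (fun i => orderOf (QuaternionGroup.xa i) = d))
      ?_).trans (Equiv.subtypeSum))
  rintro (i | i) <;> rfl

theorem natCard_quaternionGroup (m : ℕ) [NeZero m] : Nat.card (QuaternionGroup m) = 4 * m := by
  rw [Nat.card_eq_fintype_card, QuaternionGroup.card]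

theorem Nat.totient_prime_pow_mul_dvd_iff {p a u c d : ℕ} (hp : p.Prime) (ha : 0 < a)
    (hu : ¬ p ∣ u) : c * (p ^ a * u).totient ∣ d * (p ^ a * u) ↔
      c * ((p - 1) * u.totient) ∣ d * (p * u) := by
  have hcop : (p ^ a).Coprime u := ((Nat.Prime.coprime_iff_not_dvd hp).mpr hu).pow_left a
  obtain ⟨b, rfl⟩ := Nat.exists_eq_succ_of_ne_zero ha.ne'
  rw [Nat.totient_mul hcop, Nat.totient_prime_pow_succ hp, pow_succ,
    show c * (p ^ b * (p - 1) * u.totient) = p ^ b * (c * ((p - 1) * u.totient)) by ring,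
    show d * (p ^ b * p * u) = p ^ b * (d * (p * u)) by ring]
  exact Nat.mul_dvd_mul_iff_left (pow_pos hp.pos b)

/-- The arithmetic behind the classification: the orders `4 * 2 ^ j * m` with `m` odd that pass the
divisibility tests given by elements of order `4 * m` and `2 ^ (j + 1) * m`. -/
theorem eq_prime_pow_of_totient_dvd {j m : ℕ} (hj : 1 ≤ j) (hm : Odd m)
    (h1 : (2 ^ j + 1) * m.totient ∣ 2 ^ (j + 1) * m) (h2 : m.totient ∣ 4 * m) :
    ∃ k, 0 < k ∧ (j = 1 ∧ m = 3 ^ k ∨ j = 2 ∧ m = 5 ^ k) := by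
  have hodd : Odd (2 ^ j + 1) := by
    rw [Nat.odd_add_one, Nat.not_odd_iff_even]
    exact (Nat.even_pow.mpr ⟨even_two, by omega⟩)
  have hcop2 : ∀ i, (2 ^ j + 1).Coprime (2 ^ i) := fun i => (hodd.coprime_two_right).pow_right i
  have hm1 : m ≠ 1 := by
    rintro rfl
    simp only [Nat.totient_one, mul_one] at h1
    have := Nat.eq_one_of_dvd_coprimes (hcop2 (j + 1)) dvd_rfl h1
    have : 0 < 2 ^ j := by positivity
    omega
  obtain ⟨p, hp, hpm, hmin⟩ : ∃ p, p.Prime ∧ p ∣ m ∧ ∀ q, 2 ≤ q → q ∣ m → p ≤ q :=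
    ⟨m.minFac, Nat.minFac_prime hm1, Nat.minFac_dvd m, fun _ => Nat.minFac_le_of_dvd⟩
  have hoddp : ∀ q, q ∣ m → Odd q := fun q hq => hm.of_dvd_nat hq
  obtain ⟨a, u, hpu, rfl⟩ := Nat.exists_eq_pow_mul_and_not_dvd hm.pos.ne' p hp.ne_one
  have ha : 0 < a := Nat.pos_of_ne_zero (by
    rintro rfl
    exact hpu (by simpa using hpm))
  have hp3 : 3 ≤ p := by
    obtain ⟨c, hc⟩ := hoddp p hpm
    have := hp.two_le
    omega
  rw [← one_mul (Nat.totient _), Nat.totient_prime_pow_mul_dvd_iff hp ha hpu, one_mul] at h2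
  rw [Nat.totient_prime_pow_mul_dvd_iff hp ha hpu] at h1
  have hcp : (p - 1).Coprime p := by
    have := Nat.coprime_self_add_right (m := p - 1) (n := 1)
    rw [Nat.sub_add_cancel hp.one_le] at this
    simpa using this
  by_cases hu1 : u = 1
  · subst hu1
    simp only [Nat.totient_one, mul_one] at h1 h2 ⊢
    have h3 : p - 1 ∣ 4 := hcp.dvd_of_dvd_mul_right h2
    have h4 : 2 ^ j + 1 ∣ p :=
      (hcop2 (j + 1)).dvd_of_dvd_mul_left ((Dvd.intro _ rfl).trans h1)
    have h5 : 2 ^ j + 1 = p := by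
      refine ((Nat.dvd_prime hp).mp h4).resolve_left ?_
      have : 0 < 2 ^ j := by positivity
      omega
    refine ⟨a, ha, ?_⟩
    have h6 : p = 3 ∨ p = 5 := by
      have := Nat.le_of_dvd (by norm_num) h3
      have hle : p ≤ 5 := by omega
      have := hoddp p hpm
      interval_cases p <;> simp_all
    rcases h6 with h6 | h6
    · left
      refine ⟨Nat.pow_right_injective le_rfl (?_ : 2 ^ j = 2 ^ 1), by rw [h6]⟩
      omega
    · right
      refine ⟨Nat.pow_right_injective le_rfl (?_ : 2 ^ j = 2 ^ 2), by rw [h6]⟩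
      omega
  · exfalso
    have hq := Nat.minFac_prime hu1
    have hqu : u.minFac ∣ u := Nat.minFac_dvd u
    have hqm : u.minFac ∣ p ^ a * u := hqu.mul_left _
    have hpq : p < u.minFac :=
      lt_of_le_of_ne (hmin _ hq.two_le hqm) (fun h => hpu (h ▸ hqu))
    have hqodd := hoddp _ hqm
    have hpodd := hoddp _ hpm
    have hu0 : u ≠ 0 := by rintro rfl; simp at hpu
    generalize u.minFac = q at *
    obtain ⟨b, v, hqv, rfl⟩ := Nat.exists_eq_pow_mul_and_not_dvd hu0 q hq.ne_one
    have hb : 0 < b := Nat.pos_of_ne_zero (by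
      rintro rfl
      exact hqv (by simpa using hqu))
    have hvodd : Odd v := hoddp v ⟨p ^ a * q ^ b, by ring⟩
    have hr : ∀ x y : ℕ, x * ((p - 1) * y) = x * (p - 1) * y := fun x y => by ring
    have hr' : ∀ x y : ℕ, x * (p * y) = x * p * y := fun x y => by ring
    rw [hr', ← one_mul (_ * _), hr, Nat.totient_prime_pow_mul_dvd_iff hq hb hqv] at h2
    rw [hr', hr, Nat.totient_prime_pow_mul_dvd_iff hq hb hqv] at h1
    obtain ⟨c, rfl⟩ := hpodd
    obtain ⟨e, rfl⟩ := hqodd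
    simp only [Nat.add_sub_cancel] at h1 h2 hcp
    by_cases hv : v = 1
    swap
    · have hv2 : 2 < v := by
        obtain ⟨w, rfl⟩ := hvodd
        omega
      obtain ⟨t, ht⟩ := (Nat.totient_even hv2).two_dvd
      rw [ht] at h2
      have h3 : 4 * 2 ∣ 4 * ((2 * c + 1) * ((2 * e + 1) * v)) :=
        (Dvd.intro (c * e * t) (by ring)).trans (h2.trans (by rw [mul_assoc]))
      have h4 := (Nat.mul_dvd_mul_iff_left (by norm_num)).mp h3
      have h5 : Odd ((2 * c + 1) * ((2 * e + 1) * v)) :=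
        (odd_two_mul_add_one c).mul ((odd_two_mul_add_one e).mul hvodd)
      exact (Nat.not_even_iff_odd.mpr h5) (even_iff_two_dvd.mpr h4)
    subst hv
    simp only [Nat.totient_one, mul_one, one_mul] at h1 h2
    have h3 : c * e ∣ (2 * c + 1) * (2 * e + 1) := by
      have : 4 * (c * e) ∣ 4 * ((2 * c + 1) * (2 * e + 1)) := by
        convert h2 using 1 <;> ring
      exact (Nat.mul_dvd_mul_iff_left (by norm_num)).mp this
    have hcc : c.Coprime (2 * c + 1) := by
      simp
    have hcq : (2 * c).Coprime (2 * e + 1) := by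
      refine ((Nat.Prime.coprime_iff_not_dvd hq).mpr fun h => ?_).symm
      have := Nat.le_of_dvd (by omega) h
      omega
    have hc1 : c = 1 := by
      have h4 := hcc.dvd_of_dvd_mul_left ((Dvd.intro _ rfl).trans h3)
      exact Nat.eq_one_of_dvd_coprimes (Nat.Coprime.coprime_mul_left hcq) dvd_rfl h4
    subst hc1
    have he : e ∣ 3 := by
      have h4 : e.Coprime (2 * e + 1) := by simp
      exact h4.dvd_of_dvd_mul_right (by simpa using h3)
    have he3 : e = 3 := by
      rcases (Nat.dvd_prime Nat.prime_three).mp he with h | h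
      · omega
      · exact h
    subst he3
    have h4 : 2 ^ j + 1 ∣ 7 := by
      refine (hcop2 (j + 1)).dvd_of_dvd_mul_left ?_
      have h5 : 3 * ((2 ^ j + 1) * 4) ∣ 3 * (2 ^ (j + 1) * 7) := by
        convert h1 using 1 <;> ring
      exact (Dvd.intro _ rfl).trans ((Nat.mul_dvd_mul_iff_left (by norm_num)).mp h5)
    rcases (Nat.dvd_prime (by norm_num)).mp h4 with h | h
    · have : 0 < 2 ^ j := by positivity
      omega
    · have h6 : 2 ^ j = 6 := by omega
      have h7 : 3 ∣ 2 ^ j := ⟨2, h6⟩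
      have := Nat.prime_three.dvd_of_dvd_pow h7
      omega

theorem perfectOrderClasses_quaternionGroup_prod {m n C : ℕ} [NeZero m] [NeZero n] (hm : 2 ∣ m)
    (hmn : (4 * m).Coprime n)
    (hC : ∀ d, d ∣ 2 * m → (d.totient + if d = 4 then 2 * m else 0) ∣ C)
    (hn : C * n.totient ∣ 4 * m * n) :
    PerfectOrderClasses (QuaternionGroup m × Multiplicative (ZMod n)) := by
  have hcardn : Nat.card (Multiplicative (ZMod n)) = n := by
    rw [Nat.card_congr Multiplicative.toAdd, Nat.card_zmod]
  rw [perfectOrderClasses_prod_iff (by rwa [natCard_quaternionGroup, hcardn])]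
  intro x y
  have hx : orderOf x ∣ 2 * m := by
    rcases x with i | i
    · rw [QuaternionGroup.orderOf_a]
      exact Nat.div_dvd_of_dvd (Nat.gcd_dvd_left _ _)
    · rw [QuaternionGroup.orderOf_xa]
      exact mul_dvd_mul_left 2 hm
  have hy := orderOf_dvd_natCard y
  rw [orderCount_quaternionGroup m hx, orderCount_of_isCyclic hy, natCard_quaternionGroup, hcardn]
  exact (mul_dvd_mul (hC _ hx) (Nat.totient_dvd_of_dvd (hy.trans hcardn.dvd))).trans hn

theorem perfectOrderClasses_quaternionGroup_two_prod {k : ℕ} (hk : 0 < k) :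
    PerfectOrderClasses (QuaternionGroup 2 × Multiplicative (ZMod (3 ^ k))) := by
  refine perfectOrderClasses_quaternionGroup_prod (C := 6) dvd_rfl
    (Nat.Coprime.pow_right k (by norm_num)) (fun d hd => ?_) ?_
  · have := Nat.le_of_dvd (by norm_num) hd
    interval_cases d <;> revert hd <;> decide
  · obtain ⟨b, rfl⟩ := Nat.exists_eq_succ_of_ne_zero hk.ne'
    rw [Nat.totient_prime_pow_succ Nat.prime_three]
    exact ⟨2, by rw [pow_succ]; ring⟩

theorem perfectOrderClasses_quaternionGroup_four_prod {k : ℕ} (hk : 0 < k) :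
    PerfectOrderClasses (QuaternionGroup 4 × Multiplicative (ZMod (5 ^ k))) := by
  refine perfectOrderClasses_quaternionGroup_prod (C := 20) (by norm_num)
    (Nat.Coprime.pow_right k (by norm_num)) (fun d hd => ?_) ?_
  · have := Nat.le_of_dvd (by norm_num) hd
    interval_cases d <;> revert hd <;> decide
  · obtain ⟨b, rfl⟩ := Nat.exists_eq_succ_of_ne_zero hk.ne'
    rw [Nat.totient_prime_pow_succ Nat.prime_five]
    exact ⟨1, by rw [pow_succ]; ring⟩

/-- The classification of quaternion-by-cyclic groups with perfect order classes. -/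
theorem eq_of_perfectOrderClasses_quaternionGroup_prod {j n : ℕ} (hj : 1 ≤ j) (hn : Odd n)
    (h : PerfectOrderClasses (QuaternionGroup (2 ^ j) × Multiplicative (ZMod n))) :
    ∃ k, 0 < k ∧ (j = 1 ∧ n = 3 ^ k ∨ j = 2 ∧ n = 5 ^ k) := by
  have : NeZero n := ⟨hn.pos.ne'⟩
  have hcardn : Nat.card (Multiplicative (ZMod n)) = n := by
    rw [Nat.card_congr Multiplicative.toAdd, Nat.card_zmod]
  have h4j : 4 * 2 ^ j = 2 ^ (j + 2) := by ring
  have hcop : (4 * 2 ^ j).Coprime n := by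
    rw [h4j]; exact (Nat.coprime_two_left.mpr hn).pow_left _
  rw [perfectOrderClasses_prod_iff (by rwa [natCard_quaternionGroup, hcardn])] at h
  have hgen : orderOf (Multiplicative.ofAdd (1 : ZMod n)) = n := by
    rw [orderOf_ofAdd_eq_addOrderOf, ZMod.addOrderOf_one]
  have key : ∀ x : QuaternionGroup (2 ^ j), orderOf x ∣ 2 * 2 ^ j →
      ((orderOf x).totient + if orderOf x = 4 then 2 * 2 ^ j else 0) * n.totient ∣
        4 * 2 ^ j * n := fun x hx => by
    have := h x (Multiplicative.ofAdd 1)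
    rwa [orderCount_quaternionGroup _ hx, hgen, orderCount_of_isCyclic (hcardn.symm ▸ dvd_rfl),
      natCard_quaternionGroup, hcardn] at this
  have h1 : (2 ^ j + 1) * n.totient ∣ 2 ^ (j + 1) * n := by
    have := key (.xa 0) (by
      rw [QuaternionGroup.orderOf_xa]
      exact mul_dvd_mul_left 2 (dvd_pow_self 2 (by omega)))
    rw [QuaternionGroup.orderOf_xa, if_pos rfl, show Nat.totient 4 = 2 by decide] at this
    refine (Nat.mul_dvd_mul_iff_left two_pos).mp ?_
    convert this using 1 <;> ring
  refine eq_prime_pow_of_totient_dvd hj hn h1 ?_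
  rcases hj.eq_or_lt with rfl | hj2
  · exact (Dvd.intro_left _ rfl).trans h1
  · have := key (.a 1) (by rw [QuaternionGroup.orderOf_a_one])
    have h8 : 2 * 2 ^ j ≠ 4 := by
      have : 2 ^ 2 ≤ 2 ^ j := Nat.pow_le_pow_right two_pos hj2
      omega
    rw [QuaternionGroup.orderOf_a_one, if_neg h8, add_zero, ← pow_succ',
      Nat.totient_prime_pow_succ Nat.prime_two, Nat.add_one_sub_one, mul_one] at this
    refine (Nat.mul_dvd_mul_iff_left (pow_pos two_pos j)).mp ?_
    convert this using 1
    ring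

theorem HasFixedPointFreeAction.zpowers_unique {p : ℕ} [hp : Fact p.Prime] {P : Type*} [Group P]
    [Finite P] (hP : IsPGroup p P) (h : HasFixedPointFreeAction P) (x w : P) (hx : x ^ p = 1)
    (hw : w ^ p = 1) (hw1 : w ≠ 1) : x ∈ zpowers w := by
  have : Nontrivial P := ⟨w, 1, hw1⟩
  obtain ⟨z, hz, hz1, hU⟩ := h.exists_unique_subgroup hP
  have hle : zpowers w ≤ zpowers z := zpowers_le.mpr (hU w hw)
  have hcard : Nat.card (zpowers z) ≤ Nat.card (zpowers w) := by
    rw [Nat.card_zpowers, Nat.card_zpowers, orderOf_eq_prime hz hz1, orderOf_eq_prime hw hw1]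
  exact (eq_of_le_of_card_ge hle hcard) ▸ hU x hx

/-- A finite nonabelian nilpotent group acting fixed-point-freely is the product of a generalised
quaternion group and a cyclic group of odd order. -/
theorem HasFixedPointFreeAction.exists_mulEquiv_quaternionGroup_prod {H : Type*} [Group H]
    [Finite H] (hH : HasFixedPointFreeAction H) (hnil : Group.IsNilpotent H)
    (hnab : ∃ a b : H, a * b ≠ b * a) :
    ∃ j n : ℕ, 1 ≤ j ∧ Odd n ∧
      Nonempty (H ≃* QuaternionGroup (2 ^ j) × Multiplicative (ZMod n)) := by
  have hcyc : ∀ {p : ℕ} [Fact p.Prime] (P : Subgroup H), IsPGroup p P → p ≠ 2 → IsCyclic P :=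
    fun P hP hp => isCyclic_of_unique_subgroup_of_odd hp hP
      ((hH.of_injective P.subtype P.subtype_injective).zpowers_unique hP)
  let S : Sylow 2 H := default
  have hS : ¬ IsCyclic S.toSubgroup := by
    intro hS
    have hZ : IsZGroup H := ⟨fun p hp P => by
      have : Fact p.Prime := ⟨hp⟩
      rcases eq_or_ne p 2 with rfl | hp2
      · exact isCyclic_of_surjective (S.equiv P) (S.equiv P).surjective
      · exact hcyc P.toSubgroup P.2 hp2⟩
    have : IsCyclic H := inferInstance
    obtain ⟨a, b, hab⟩ := hnab
    exact hab (mul_comm' a b)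
  obtain ⟨N, hN2, ⟨e⟩⟩ := hnil.exists_sylow_prod_mulEquiv 2 S
  have hNodd : Odd (Nat.card N) := by
    rwa [← Nat.not_even_iff_odd, even_iff_two_dvd]
  have hZ : IsZGroup N := ⟨fun p hp P => by
    have : Fact p.Prime := ⟨hp⟩
    rcases eq_or_ne p 2 with rfl | hp2
    · have hbot : Nat.card P = 1 := by
        rw [Sylow.card_eq_multiplicity, Nat.factorization_eq_zero_of_not_dvd hN2, pow_zero]
      have := (Nat.card_eq_one_iff_unique.mp hbot).1
      infer_instance
    · exact isCyclic_of_unique_subgroup_of_odd hp2 P.2 ((hH.of_injective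
        (N.subtype.comp P.toSubgroup.subtype)
        (N.subtype_injective.comp P.toSubgroup.subtype_injective)).zpowers_unique P.2)⟩
  have hNcyc : IsCyclic N := inferInstance
  obtain ⟨a, x, n, ha, hxa, hx2, hx, hg⟩ := exists_quaternion_generators S.2
    ((hH.of_injective S.toSubgroup.subtype S.toSubgroup.subtype_injective).zpowers_unique S.2) hS
  obtain ⟨q⟩ := nonempty_quaternionGroup_mulEquiv (m := 2 ^ (n + 1)) (by rw [ha, pow_succ']) hxa
    hx2 hx hg
  exact ⟨n + 1, Nat.card N, by omega, hNodd,
    ⟨e.symm.trans (q.symm.prodCongr (zmodCyclicMulEquiv hNcyc).symm)⟩⟩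

/-- The non-abelian nilpotent Frobenius complements with perfect order classes are exactly
`Q₈ × C_{3^k}` and `Q₁₆ × C_{5^k}`.  (In Mathlib, `QuaternionGroup n` has order `4n`, so
`Q₈ = QuaternionGroup 2` and `Q₁₆ = QuaternionGroup 4`.) -/
theorem nilpotent_complement_perfectOrderClasses_iff
    {H : Type*} [Group H] [Finite H]
    (hnab : ∃ a b : H, a * b ≠ b * a)
    (hnil : Group.IsNilpotent H)
    (hcompl : ∃ (G : Type) (_ : Group G) (_ : Finite G) (K H' : Subgroup G),
      IsFrobeniusWith K H' ∧ Nonempty (H ≃* H')) :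
    PerfectOrderClasses H ↔
      ∃ k : ℕ, 0 < k ∧
        (Nonempty (H ≃* (QuaternionGroup 2 × Multiplicative (ZMod (3 ^ k)))) ∨
          Nonempty (H ≃* (QuaternionGroup 4 × Multiplicative (ZMod (5 ^ k))))) := by
  obtain ⟨G, _, _, K, H', hF, ⟨f⟩⟩ := hcompl
  constructor
  · intro h
    have hH : HasFixedPointFreeAction H :=
      hF.hasFixedPointFreeAction.of_injective f.toMonoidHom f.injective
    obtain ⟨j, n, hj, hn, ⟨e⟩⟩ := hH.exists_mulEquiv_quaternionGroup_prod hnil hnab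
    obtain ⟨k, hk, ⟨rfl, rfl⟩ | ⟨rfl, rfl⟩⟩ :=
      eq_of_perfectOrderClasses_quaternionGroup_prod hj hn (h.congr e)
    · exact ⟨k, hk, Or.inl ⟨e⟩⟩
    · exact ⟨k, hk, Or.inr ⟨e⟩⟩
  · rintro ⟨k, hk, ⟨⟨e⟩⟩ | ⟨⟨e⟩⟩⟩
    · exact (perfectOrderClasses_quaternionGroup_two_prod hk).congr e.symm
    · exact (perfectOrderClasses_quaternionGroup_four_prod hk).congr e.symm
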